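/- Let m, n, r be positive integers with r ≤ m and r ≤ n. Let U be an m×r real matrix with orthonormal columns (Uᵀ U = I_r) and V an n×r real matrix with orthonormal columns (Vᵀ V = I_r). Then the set T = { M ∈ ℝ^{m×n} : (I_m − U Uᵀ) M (I_n − V Vᵀ) = 0 } is a linear subspace of ℝ^{m×n} of dimension (m + n)·r − r². (T is the tangent space at the point U Σ Vᵀ of the manifold of m×n matrices of fixed rank r.) -/

import Mathlib

/-!
With `P = 1 - U Uᵀ` and `Q = 1 - V Vᵀ`, both idempotent, the set in question is the kernel of the
idempotent linear map `M ↦ P M Q`. The rank of an idempotent map is its trace, and the trace of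
`M ↦ P M Q` is `tr P * tr Q = (m - r) * (n - r)`. Rank-nullity then gives the dimension
`m n - (m - r) (n - r) = (m + n) r - r²`.
-/

open Matrix

/-- The linear map `M ↦ P M Q` on rectangular matrices. -/
def sandwich {m n : ℕ} (P : Matrix (Fin m) (Fin m) ℝ) (Q : Matrix (Fin n) (Fin n) ℝ) :
    Matrix (Fin m) (Fin n) ℝ →ₗ[ℝ] Matrix (Fin m) (Fin n) ℝ where
  toFun M := P * M * Q
  map_add' A B := by rw [Matrix.mul_add, Matrix.add_mul]
  map_smul' c A := by simp

/-- On the standard basis, the diagonal coefficient of `M ↦ P M Q` at `E_ij` is `P_ii * Q_jj`. -/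
lemma trace_sandwich {m n : ℕ} (P : Matrix (Fin m) (Fin m) ℝ) (Q : Matrix (Fin n) (Fin n) ℝ) :
    LinearMap.trace ℝ _ (sandwich P Q) = P.trace * Q.trace := by
  rw [LinearMap.trace_eq_matrix_trace ℝ (Matrix.stdBasis ℝ (Fin m) (Fin n))]
  simp only [Matrix.trace, Matrix.diag, LinearMap.toMatrix_apply, Fintype.sum_prod_type,
    Finset.sum_mul_sum]
  refine Finset.sum_congr rfl fun i _ => Finset.sum_congr rfl fun j _ => ?_
  rw [Matrix.stdBasis_eq_single]
  change (P * Matrix.single i j (1 : ℝ) * Q : Matrix (Fin m) (Fin n) ℝ) i j = _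
  simp [Matrix.mul_apply, Matrix.single_apply, ite_and]

lemma isIdempotentElem_one_sub_mul_transpose {m r : ℕ} {U : Matrix (Fin m) (Fin r) ℝ}
    (hU : Uᵀ * U = 1) : IsIdempotentElem (1 - U * Uᵀ) := by
  refine IsIdempotentElem.one_sub ?_
  rw [IsIdempotentElem, Matrix.mul_assoc, ← Matrix.mul_assoc Uᵀ, hU, Matrix.one_mul]

lemma trace_one_sub_mul_transpose {m r : ℕ} {U : Matrix (Fin m) (Fin r) ℝ}
    (hU : Uᵀ * U = 1) : (1 - U * Uᵀ).trace = (m : ℝ) - r := by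
  rw [Matrix.trace_sub, Matrix.trace_mul_comm, hU]
  simp

theorem tangent_space_fixed_rank_dim {m n r : ℕ}
    (hm : 0 < m) (hn : 0 < n) (hr : 0 < r) (hrm : r ≤ m) (hrn : r ≤ n)
    (U : Matrix (Fin m) (Fin r) ℝ) (V : Matrix (Fin n) (Fin r) ℝ)
    (hU : Uᵀ * U = 1) (hV : Vᵀ * V = 1) :
    ∃ T : Submodule ℝ (Matrix (Fin m) (Fin n) ℝ),
      (T : Set (Matrix (Fin m) (Fin n) ℝ)) =
        { M : Matrix (Fin m) (Fin n) ℝ | (1 - U * Uᵀ) * M * (1 - V * Vᵀ) = 0 } ∧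
      Module.finrank ℝ T = (m + n) * r - r ^ 2 := by
  have hP := isIdempotentElem_one_sub_mul_transpose hU
  have hQ := isIdempotentElem_one_sub_mul_transpose hV
  have htr := trace_sandwich (1 - U * Uᵀ) (1 - V * Vᵀ)
  rw [trace_one_sub_mul_transpose hU, trace_one_sub_mul_transpose hV] at htr
  refine ⟨LinearMap.ker (sandwich (1 - U * Uᵀ) (1 - V * Vᵀ)), rfl, ?_⟩
  generalize 1 - U * Uᵀ = P at *
  generalize 1 - V * Vᵀ = Q at *
  have hproj : LinearMap.IsProj (LinearMap.range (sandwich P Q)) (sandwich P Q) := by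
    refine ⟨fun M => LinearMap.mem_range_self _ M, ?_⟩
    rintro _ ⟨M, rfl⟩
    change P * (P * M * Q) * Q = P * M * Q
    rw [← Matrix.mul_assoc, ← Matrix.mul_assoc, hP.eq, Matrix.mul_assoc, hQ.eq]
  rw [hproj.trace] at htr
  have hrn' := LinearMap.finrank_range_add_finrank_ker (sandwich P Q)
  rw [Module.finrank_matrix] at hrn'
  simp only [Fintype.card_fin, Module.finrank_self, mul_one] at hrn'
  obtain ⟨a, rfl⟩ := Nat.exists_eq_add_of_le hrm
  obtain ⟨b, rfl⟩ := Nat.exists_eq_add_of_le hrn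
  have hrank : Module.finrank ℝ (LinearMap.range (sandwich P Q)) = a * b := by
    have : ((Module.finrank ℝ (LinearMap.range (sandwich P Q)) : ℕ) : ℝ) = ((a * b : ℕ) : ℝ) := by
      rw [htr]; push_cast; ring
    exact_mod_cast this
  rw [hrank] at hrn'
  apply Nat.eq_sub_of_add_eq
  nlinarith
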